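/- Let ρ₀ > 0 and M > 0, and let f be a 2π-periodic function that extends to a function analytic on the open strip {z ∈ ℂ : |Im z| < ρ₀} with |f(z)| ≤ M there. Let 0 ≤ α < 1/4, N a positive integer, x̃_{−N},…,x̃_N a set of α-perturbed nodes, and w̃_{−N},…,w̃_N the unique quadrature weights exact on T_N at these nodes. Then |Σ_{j=−N}^{N} w̃_j f(x̃_j) − ∫_{−π}^{π} f(x) dx| ≤ (16Mπ/(cos(πα) − sin(πα))) · e^{−ρ₀ N}/(e^{ρ₀} − 1). -/

import Mathlib

open Real Finset

/-- `q` is a trigonometric polynomial of degree ≤ N. -/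
def IsTrigPoly (N : ℕ) (q : ℝ → ℂ) : Prop :=
  ∃ c : ℤ → ℂ, ∀ x : ℝ,
    q x = ∑ k ∈ Finset.Icc (-(N:ℤ)) (N:ℤ), c k * Complex.exp (Complex.I * (k : ℂ) * (x : ℂ))

/-- `x` is a set of α-perturbed nodes of size 2N+1. -/
def PerturbedNodes (N : ℕ) (α : ℝ) (x : ℤ → ℝ) : Prop :=
  ∀ j ∈ Finset.Icc (-(N:ℤ)) (N:ℤ),
    |x j - (j : ℝ) * (2*π/(2*N+1))| ≤ α * (2*π/(2*N+1))

/-- The weights `w` form a quadrature rule at the nodes `x` that is exact on `T_N`. -/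
def ExactQuad (N : ℕ) (x : ℤ → ℝ) (w : ℤ → ℝ) : Prop :=
  ∀ q : ℝ → ℂ, IsTrigPoly N q →
    ∑ j ∈ Finset.Icc (-(N:ℤ)) (N:ℤ), (w j : ℂ) * q (x j) = ∫ t in (-π)..π, q t

/-!
The weights satisfy `E w = 2π e₀`, where `E = (exp (i k x_j))` tests exactness on the exponentials
of degree at most `N`. For equispaced nodes `E` is a matrix `K` with `Kᴴ K = (2N + 1) • 1`; in
general it is the Hadamard product of `K` with `exp (i δ_j t_k)`, where `|δ_j| ≤ α` and
`|t_k| ≤ π`. As in the proof of Kadec's 1/4-theorem, expand `1 - cos (δ t)` in the functions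
`exp (i n t)` and `sin (δ t)` in `exp (i (n - 1/2) t)`: each term multiplies `K` by diagonal
matrices on both sides, and the coefficients grow with `|δ|` and have alternating signs, so that
the bounds at `δ = α` sum to the values at `t = π`. Hence
`‖K - E‖ ≤ (1 - cos πα + sin πα) √(2N + 1)`, and inverting and applying Cauchy-Schwarz gives
`∑ |w_j| ≤ 2π / (cos πα - sin πα)`. Exactness then reduces the quadrature error to the uniform
distance from `f` to trigonometric polynomials of degree `N`, which shifting the contour in the
Fourier coefficients shows to be geometrically small.
-/

open Complex (I)

section FourierSeries

theorem hasSum_fourierCoeffOn {T : ℝ} [hT : Fact (0 < T)] {a : ℝ} {g : ℝ → ℂ}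
    (hg : ContinuousOn g (Set.Icc a (a + T))) (hgT : g a = g (a + T))
    (hs : Summable (fourierCoeffOn (lt_add_of_pos_right a hT.out) g)) {t : ℝ}
    (ht : t ∈ Set.Icc a (a + T)) :
    HasSum (fun n : ℤ ↦ fourierCoeffOn (lt_add_of_pos_right a hT.out) g n •
      fourier n (t : AddCircle T)) (g t) := by
  let G : C(AddCircle T, ℂ) := ⟨AddCircle.liftIco T a g, AddCircle.liftIco_continuous hgT hg⟩
  have hcoeff : fourierCoeff G = fourierCoeffOn (lt_add_of_pos_right a hT.out) g :=
    funext fun n ↦ fourierCoeff_liftIco_eq g n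
  have hG : G (t : AddCircle T) = g t := by
    rcases ht.2.lt_or_eq with h | rfl
    · exact AddCircle.liftIco_coe_apply ⟨ht.1, h⟩
    · rw [AddCircle.coe_add_period, ← hgT]
      exact AddCircle.liftIco_coe_apply ⟨le_rfl, lt_add_of_pos_right a hT.out⟩
  simpa only [hcoeff, hG] using
    has_pointwise_sum_fourier_series_of_summable (f := G) (hcoeff ▸ hs) (t : AddCircle T)

theorem hasSum_mul_exp_of_summable {g : ℝ → ℂ} (hg : ContinuousOn g (Set.Icc (-π) π))
    (hgπ : g (-π) = g π) {c : ℤ → ℂ}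
    (hc : ∀ n : ℤ, (2 * π : ℂ)⁻¹ * ∫ t in -π..π, Complex.exp (-(I * n * t)) * g t = c n)
    (hs : Summable c) {t : ℝ} (ht : t ∈ Set.Icc (-π) π) :
    HasSum (fun n : ℤ ↦ c n * Complex.exp (I * n * t)) (g t) := by
  have : Fact (0 < 2 * π) := ⟨two_pi_pos⟩
  have hπ : (π : ℂ) ≠ 0 := Complex.ofReal_ne_zero.mpr pi_ne_zero
  have hend : -π + 2 * π = π := by ring
  have hexp (n : ℤ) (s : ℝ) : fourier n (s : AddCircle (2 * π)) = Complex.exp (I * n * s) := by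
    rw [fourier_coe_apply]
    congr 1
    push_cast
    field_simp
  have hcoeff : fourierCoeffOn (lt_add_of_pos_right (-π) two_pi_pos) g = c := by
    funext n
    rw [← hc, fourierCoeffOn_eq_integral, add_sub_cancel_left, hend, Complex.real_smul]
    simp [hexp]
  have key := hasSum_fourierCoeffOn (T := 2 * π) (a := -π) (g := g) (t := t)
    (by rwa [hend]) (by rwa [hend]) (by rwa [hcoeff]) (by rwa [hend])
  simpa only [hcoeff, hexp, smul_eq_mul] using key

theorem periodic_exp_I_mul_intCast_mul (n : ℤ) :
    Function.Periodic (fun z : ℂ ↦ Complex.exp (I * n * z)) (2 * π : ℝ) := fun z ↦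
  Complex.exp_eq_exp_iff_exists_int.mpr ⟨n, by push_cast; ring⟩

theorem hasSum_mul_exp_of_periodic_of_summable {g : ℝ → ℂ} (hg : Continuous g)
    (hgp : Function.Periodic g (2 * π)) {c : ℤ → ℂ}
    (hc : ∀ n : ℤ, (2 * π : ℂ)⁻¹ * ∫ t in -π..π, Complex.exp (-(I * n * t)) * g t = c n)
    (hs : Summable c) (t : ℝ) :
    HasSum (fun n : ℤ ↦ c n * Complex.exp (I * n * t)) (g t) := by
  have hper : Function.Periodic
      (fun t : ℝ ↦ HasSum (fun n : ℤ ↦ c n * Complex.exp (I * n * t)) (g t)) (2 * π) := fun t ↦ by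
    have h (n : ℤ) := periodic_exp_I_mul_intCast_mul n t
    simp only [Complex.ofReal_add, hgp t, h]
  obtain ⟨s, hs', hst⟩ := hper.exists_mem_Ico two_pi_pos t (-π)
  rw [hst]
  have hend : -π + 2 * π = π := by ring
  exact hasSum_mul_exp_of_summable hg.continuousOn (by rw [← hgp, hend]) hc hs
    ⟨hs'.1, (hend ▸ hs'.2).le⟩

end FourierSeries

section Sinc

theorem inv_two_pi_mul_integral_exp_I_mul (s : ℝ) :
    (2 * π : ℂ)⁻¹ * ∫ t in -π..π, Complex.exp (I * s * t) = sinc (π * s) := by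
  have hπ : (π : ℂ) ≠ 0 := Complex.ofReal_ne_zero.mpr pi_ne_zero
  rcases eq_or_ne s 0 with rfl | hs
  · simp only [Complex.ofReal_zero, mul_zero, zero_mul, Complex.exp_zero,
      intervalIntegral.integral_const, sub_neg_eq_add, sinc_zero, Complex.real_smul]
    push_cast
    field_simp
    norm_num
  · have hs' : (s : ℂ) ≠ 0 := Complex.ofReal_ne_zero.mpr hs
    rw [integral_exp_mul_complex (mul_ne_zero Complex.I_ne_zero hs'),
      sinc_of_ne_zero (mul_ne_zero pi_ne_zero hs)]
    push_cast
    rw [Complex.sin, show I * s * π = π * s * I by ring, show I * s * -π = -(π * s) * I by ring]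
    have hI := Complex.I_ne_zero
    field_simp
    rw [Complex.I_sq]
    ring

theorem antitoneOn_sinc : AntitoneOn sinc (Set.Icc 0 π) := by
  intro x hx y hy hxy
  rcases hx.1.eq_or_lt with rfl | hx0
  · simpa using sinc_le_one y
  have hy0 := hx0.trans_le hxy
  have hslope := strictConcaveOn_sin_Icc.concaveOn.slope_anti (Set.left_mem_Icc.mpr pi_nonneg)
    ⟨hx, hx0.ne'⟩ ⟨hy, hy0.ne'⟩ hxy
  simpa [slope_def_field, sinc_of_ne_zero, hx0.ne', hy0.ne'] using hslope

end Sinc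

section Trigonometric

theorem sin_lt_cos_of_lt_pi_div_four {x : ℝ} (hx₀ : 0 ≤ x) (hx₁ : x < π / 4) : sin x < cos x := by
  rw [← cos_pi_div_two_sub]
  exact cos_lt_cos_of_nonneg_of_le_pi hx₀ (by linarith) (by linarith)

theorem monotoneOn_mul_cos : MonotoneOn (fun x ↦ x * cos x) (Set.Icc 0 (π / 4)) := by
  have hderiv (x : ℝ) : HasDerivAt (fun x ↦ x * cos x) (1 * cos x + x * -sin x) x :=
    (hasDerivAt_id x).mul (hasDerivAt_cos x)
  refine monotoneOn_of_deriv_nonneg (convex_Icc _ _) (by fun_prop) (by fun_prop) fun x hx ↦ ?_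
  rw [interior_Icc] at hx
  have hsin : 0 ≤ sin x := sin_nonneg_of_nonneg_of_le_pi hx.1.le (by linarith [hx.1, hx.2])
  rw [(hderiv x).deriv, one_mul, mul_neg, ← sub_eq_add_neg, sub_nonneg]
  calc x * sin x ≤ 1 * sin x := by gcongr; linarith [hx.2, pi_le_four]
    _ ≤ cos x := by linarith [sin_lt_cos_of_lt_pi_div_four hx.1.le hx.2]

end Trigonometric

section KadecCoefficients

/-- The Fourier coefficients of `t ↦ 1 - cos (δ t)` on `[-π, π]`. -/
noncomputable def oneSubCosCoeff (δ : ℝ) (n : ℤ) : ℝ :=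
  sinc (π * n) - (sinc (π * (n - δ)) + sinc (π * (n + δ))) / 2

/-- The coefficients of `t ↦ sin (δ t)` on `[-π, π]` in the functions
`-I * exp (I * (n - 1 / 2) * t)`. -/
noncomputable def sinCoeff (δ : ℝ) (n : ℤ) : ℝ :=
  (sinc (π * (n - 1 / 2 - δ)) - sinc (π * (n - 1 / 2 + δ))) / 2

theorem oneSubCosCoeff_zero (δ : ℝ) : oneSubCosCoeff δ 0 = 1 - sinc (π * δ) := by
  simp [oneSubCosCoeff, sinc_neg]

theorem oneSubCosCoeff_of_ne {δ : ℝ} {n : ℤ} (hn : n ≠ 0) (h₁ : (n - δ : ℝ) ≠ 0)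
    (h₂ : (n + δ : ℝ) ≠ 0) :
    oneSubCosCoeff δ n = (-1) ^ n * (δ * sin (π * δ) / (π * ((n - δ) * (n + δ)))) := by
  have hn' : (n : ℝ) ≠ 0 := Int.cast_ne_zero.mpr hn
  have hsin₀ : sin (π * n) = 0 := by rw [mul_comm, sin_int_mul_pi]
  have hsin₁ : sin (π * (n - δ)) = -((-1) ^ n * sin (π * δ)) := by
    rw [mul_sub, mul_comm π (n : ℝ), sin_int_mul_pi_sub]
  have hsin₂ : sin (π * (n + δ)) = (-1) ^ n * sin (π * δ) := by
    rw [mul_add, add_comm, mul_comm π (n : ℝ), sin_add_int_mul_pi]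
  rw [oneSubCosCoeff, sinc_of_ne_zero (by positivity), sinc_of_ne_zero (by positivity),
    sinc_of_ne_zero (by positivity), hsin₀, hsin₁, hsin₂]
  field_simp
  ring

theorem sinCoeff_of_ne {δ : ℝ} {n : ℤ} (h₁ : (n - 1 / 2 - δ : ℝ) ≠ 0)
    (h₂ : (n - 1 / 2 + δ : ℝ) ≠ 0) :
    sinCoeff δ n =
      -((-1) ^ n * (δ * cos (π * δ) / (π * ((n - 1 / 2 - δ) * (n - 1 / 2 + δ))))) := by
  have hsin₁ : sin (π * (n - 1 / 2 - δ)) = -((-1) ^ n * cos (π * δ)) := by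
    rw [show π * (n - 1 / 2 - δ) = n * π - (π * δ + π / 2) by ring, sin_int_mul_pi_sub,
      sin_add_pi_div_two]
  have hsin₂ : sin (π * (n - 1 / 2 + δ)) = -((-1) ^ n * cos (π * δ)) := by
    rw [show π * (n - 1 / 2 + δ) = π * δ - π / 2 + n * π by ring, sin_add_int_mul_pi,
      sin_sub_pi_div_two, mul_neg]
  rw [sinCoeff, sinc_of_ne_zero (mul_ne_zero pi_ne_zero h₁),
    sinc_of_ne_zero (mul_ne_zero pi_ne_zero h₂), hsin₁, hsin₂]
  generalize (n - 1 / 2 : ℝ) = m at h₁ h₂ ⊢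
  field_simp
  ring

theorem eventually_cofinite_intCast_ne (a : ℝ) : ∀ᶠ n : ℤ in Filter.cofinite, (n : ℝ) ≠ a :=
  Int.cast_injective.tendsto_cofinite.eventually (Filter.eventually_cofinite_ne a)

theorem summable_inv_intCast_add_mul_intCast_add (u v : ℝ) :
    Summable fun n : ℤ ↦ ((n + u) * (n + v) : ℝ)⁻¹ := by
  rw [← Complex.summable_ofReal]
  push_cast
  apply EisensteinSeries.summable_inv_of_isBigO_rpow_inv (a := 2) one_lt_two
  have h (z : ℝ) := EisensteinSeries.linear_inv_isBigO_right 1 z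
  simpa [add_comm, pow_two] using (h v).mul (h u)

theorem summable_oneSubCosCoeff (δ : ℝ) : Summable (oneSubCosCoeff δ) := by
  refine summable_abs_iff.mp (((summable_inv_intCast_add_mul_intCast_add (-δ) δ).abs.mul_left
    |δ * sin (π * δ) / π|).congr_cofinite ?_)
  filter_upwards [eventually_cofinite_intCast_ne 0, eventually_cofinite_intCast_ne δ,
    eventually_cofinite_intCast_ne (-δ)] with n h₀ h₁ h₂
  rw [oneSubCosCoeff_of_ne (Int.cast_ne_zero.mp h₀) (sub_ne_zero.mpr h₁)
    (add_eq_zero_iff_eq_neg.not.mpr h₂), abs_mul, abs_neg_one_zpow, one_mul, ← div_div, ← abs_mul,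
    ← div_eq_mul_inv, sub_eq_add_neg]

theorem summable_sinCoeff (δ : ℝ) : Summable (sinCoeff δ) := by
  refine summable_abs_iff.mp (((summable_inv_intCast_add_mul_intCast_add (-(1 / 2) - δ)
    (-(1 / 2) + δ)).abs.mul_left |δ * cos (π * δ) / π|).congr_cofinite ?_)
  filter_upwards [eventually_cofinite_intCast_ne (1 / 2 + δ),
    eventually_cofinite_intCast_ne (1 / 2 - δ)] with n h₁ h₂
  have h₁' : (n - 1 / 2 - δ : ℝ) ≠ 0 := fun h ↦ h₁ (by linarith)
  have h₂' : (n - 1 / 2 + δ : ℝ) ≠ 0 := fun h ↦ h₂ (by linarith)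
  rw [sinCoeff_of_ne h₁' h₂', abs_neg, abs_mul, abs_neg_one_zpow, one_mul, ← div_div, ← abs_mul,
    ← div_eq_mul_inv]
  ring_nf

theorem intervalIntegrable_exp_I_mul (s a b : ℝ) :
    IntervalIntegrable (fun t : ℝ ↦ Complex.exp (I * s * t)) MeasureTheory.volume a b :=
  Continuous.intervalIntegrable (by fun_prop) a b

theorem hasSum_oneSubCosCoeff_mul_exp (δ : ℝ) {t : ℝ} (ht : t ∈ Set.Icc (-π) π) :
    HasSum (fun n : ℤ ↦ (oneSubCosCoeff δ n : ℂ) * Complex.exp (I * n * t))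
      ((1 - cos (δ * t) : ℝ) : ℂ) := by
  refine hasSum_mul_exp_of_summable (g := fun t ↦ ((1 - cos (δ * t) : ℝ) : ℂ)) (by fun_prop)
    (by simp) (fun n ↦ ?_) (Complex.summable_ofReal.mpr (summable_oneSubCosCoeff δ)) ht
  have hexp (t : ℝ) : Complex.exp (-(I * n * t)) * ((1 - cos (δ * t) : ℝ) : ℂ) =
      Complex.exp (I * (-n : ℝ) * t) - (Complex.exp (I * (-(n - δ) : ℝ) * t) +
        Complex.exp (I * (-(n + δ) : ℝ) * t)) / 2 := by
    push_cast
    rw [Complex.cos, mul_sub, mul_div_assoc', mul_add, ← Complex.exp_add, ← Complex.exp_add]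
    ring_nf
  have hint (s : ℝ) := intervalIntegrable_exp_I_mul s (-π) π
  simp_rw [hexp]
  rw [intervalIntegral.integral_sub (hint _) (((hint _).add (hint _)).div_const 2),
    intervalIntegral.integral_div, intervalIntegral.integral_add (hint _) (hint _), mul_sub,
    mul_div_assoc', mul_add]
  simp only [inv_two_pi_mul_integral_exp_I_mul, mul_neg, sinc_neg, oneSubCosCoeff]
  push_cast
  rfl

theorem inv_two_pi_mul_integral_exp_mul_sin (δ : ℝ) (n : ℤ) :
    (2 * π : ℂ)⁻¹ * ∫ t in -π..π,
      Complex.exp (-(I * n * t)) * (Complex.exp (I * t / 2) * (sin (δ * t) : ℂ)) =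
        -I * sinCoeff δ n := by
  have hexp (t : ℝ) :
      Complex.exp (-(I * n * t)) * (Complex.exp (I * t / 2) * (sin (δ * t) : ℂ)) =
        -I * ((Complex.exp (I * (-(n - 1 / 2 - δ) : ℝ) * t) -
          Complex.exp (I * (-(n - 1 / 2 + δ) : ℝ) * t)) / 2) := by
    have hsin : (sin (δ * t) : ℂ) =
        -I * ((Complex.exp (I * (δ * t)) - Complex.exp (-(I * (δ * t)))) / 2) := by
      push_cast
      rw [Complex.sin]
      ring_nf
    rw [hsin, mul_left_comm (Complex.exp _) (-I), mul_left_comm (Complex.exp _) (-I),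
      mul_div_assoc', mul_div_assoc', mul_sub, mul_sub]
    simp only [← Complex.exp_add]
    push_cast
    ring_nf
  have hint (s : ℝ) := intervalIntegrable_exp_I_mul s (-π) π
  simp_rw [hexp]
  rw [intervalIntegral.integral_const_mul, intervalIntegral.integral_div,
    intervalIntegral.integral_sub (hint _) (hint _), mul_left_comm, mul_div_assoc', mul_sub]
  simp only [inv_two_pi_mul_integral_exp_I_mul, mul_neg, sinc_neg, sinCoeff]
  push_cast
  rfl

-- Multiplying by `exp (I * t / 2)` makes `sin (δ t)` take the same value at both ends of `[-π, π]`.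
theorem hasSum_sinCoeff_mul_exp (δ : ℝ) {t : ℝ} (ht : t ∈ Set.Icc (-π) π) :
    HasSum (fun n : ℤ ↦ (sinCoeff δ n : ℂ) * (-I * Complex.exp (I * (n - 1 / 2) * t)))
      (sin (δ * t) : ℂ) := by
  have hends : Complex.exp (I * (-π : ℝ) / 2) * (sin (δ * -π) : ℂ) =
      Complex.exp (I * π / 2) * (sin (δ * π) : ℂ) := by
    rw [show I * (π : ℂ) / 2 = π / 2 * I by ring,
      show I * ((-π : ℝ) : ℂ) / 2 = -π / 2 * I by push_cast; ring, Complex.exp_pi_div_two_mul_I,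
      Complex.exp_neg_pi_div_two_mul_I, mul_neg δ, sin_neg, Complex.ofReal_neg, neg_mul_neg]
  have hsum := hasSum_mul_exp_of_summable
    (g := fun t ↦ Complex.exp (I * t / 2) * (sin (δ * t) : ℂ)) (by fun_prop) hends
    (inv_two_pi_mul_integral_exp_mul_sin δ)
    ((Complex.summable_ofReal.mpr (summable_sinCoeff δ)).mul_left (-I)) ht
  have hterm (n : ℤ) : Complex.exp (-(I * t / 2)) * (-I * sinCoeff δ n * Complex.exp (I * n * t)) =
      sinCoeff δ n * (-I * Complex.exp (I * (n - 1 / 2) * t)) := by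
    rw [mul_left_comm, ← Complex.exp_add]
    ring_nf
  have hcancel (z : ℂ) : Complex.exp (-(I * t / 2)) * (Complex.exp (I * t / 2) * z) = z := by
    rw [← mul_assoc, ← Complex.exp_add, neg_add_cancel, Complex.exp_zero, one_mul]
  simpa only [hterm, hcancel] using hsum.mul_left (Complex.exp (-(I * t / 2)))

theorem sub_mul_add_pos_of_ne_zero {δ : ℝ} (hδ : |δ| < 1) {n : ℤ} (hn : n ≠ 0) :
    0 < ((n - δ) * (n + δ) : ℝ) := by
  have hn' : (1 : ℝ) ≤ |(n : ℝ)| := by exact_mod_cast Int.one_le_abs hn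
  linarith [sq_lt_sq.mpr (hδ.trans_le hn'), show ((n - δ) * (n + δ) : ℝ) = n ^ 2 - δ ^ 2 by ring]

theorem sub_half_sub_mul_sub_half_add_pos {δ : ℝ} (hδ : |δ| < 1 / 2) (n : ℤ) :
    0 < ((n - 1 / 2 - δ) * (n - 1 / 2 + δ) : ℝ) := by
  have hn' : (1 / 2 : ℝ) ≤ |(n - 1 / 2 : ℝ)| := by
    rcases le_or_gt n 0 with h | h
    · have : (n : ℝ) ≤ 0 := by exact_mod_cast h
      exact le_abs'.mpr (.inl (by linarith))
    · have : (1 : ℝ) ≤ n := by exact_mod_cast h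
      exact le_abs'.mpr (.inr (by linarith))
  linarith [sq_lt_sq.mpr (hδ.trans_le hn'),
    show ((n - 1 / 2 - δ) * (n - 1 / 2 + δ) : ℝ) = (n - 1 / 2) ^ 2 - δ ^ 2 by ring]

theorem abs_oneSubCosCoeff_zero (δ : ℝ) : |oneSubCosCoeff δ 0| = 1 - sinc (π * δ) := by
  rw [oneSubCosCoeff_zero, abs_of_nonneg (sub_nonneg.mpr (sinc_le_one _))]

theorem abs_oneSubCosCoeff_of_ne_zero {δ : ℝ} (hδ₀ : 0 ≤ δ) (hδ₁ : δ < 1) {n : ℤ} (hn : n ≠ 0) :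
    |oneSubCosCoeff δ n| = δ * sin (π * δ) / (π * ((n - δ) * (n + δ))) := by
  have hpos := sub_mul_add_pos_of_ne_zero (abs_lt.mpr ⟨by linarith, hδ₁⟩) hn
  have hsin : 0 ≤ sin (π * δ) := sin_nonneg_of_nonneg_of_le_pi (by positivity)
    (mul_le_of_le_one_right pi_nonneg hδ₁.le)
  rw [oneSubCosCoeff_of_ne hn (left_ne_zero_of_mul hpos.ne') (right_ne_zero_of_mul hpos.ne'),
    abs_mul, abs_neg_one_zpow, one_mul, abs_of_nonneg (by positivity)]

theorem abs_sinCoeff {δ : ℝ} (hδ₀ : 0 ≤ δ) (hδ₁ : δ < 1 / 2) (n : ℤ) :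
    |sinCoeff δ n| = δ * cos (π * δ) / (π * ((n - 1 / 2 - δ) * (n - 1 / 2 + δ))) := by
  have hpos := sub_half_sub_mul_sub_half_add_pos (abs_lt.mpr ⟨by linarith, hδ₁⟩) n
  have hcos : 0 ≤ cos (π * δ) := cos_nonneg_of_neg_pi_div_two_le_of_le
    (by linarith [mul_nonneg pi_nonneg hδ₀, pi_nonneg])
    (by linarith [mul_le_mul_of_nonneg_left hδ₁.le pi_nonneg])
  rw [sinCoeff_of_ne (left_ne_zero_of_mul hpos.ne') (right_ne_zero_of_mul hpos.ne'), abs_neg,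
    abs_mul, abs_neg_one_zpow, one_mul, abs_of_nonneg (by positivity)]

theorem oneSubCosCoeff_abs (δ : ℝ) (n : ℤ) : oneSubCosCoeff |δ| n = oneSubCosCoeff δ n := by
  rcases abs_choice δ with h | h <;> rw [h]
  rw [oneSubCosCoeff, sub_neg_eq_add, ← sub_eq_add_neg, add_comm (sinc _), oneSubCosCoeff]

theorem abs_sinCoeff_abs (δ : ℝ) (n : ℤ) : |sinCoeff |δ| n| = |sinCoeff δ n| := by
  rcases abs_choice δ with h | h <;> rw [h]
  rw [sinCoeff, sub_neg_eq_add, ← sub_eq_add_neg, abs_div, abs_sub_comm, ← abs_div, sinCoeff]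

theorem abs_oneSubCosCoeff_le {α δ : ℝ} (hα : α ≤ 1 / 2) (hδ : |δ| ≤ α) (n : ℤ) :
    |oneSubCosCoeff δ n| ≤ |oneSubCosCoeff α n| := by
  rw [← oneSubCosCoeff_abs δ]
  have hδ₀ := abs_nonneg δ
  generalize |δ| = δ at hδ hδ₀ ⊢
  have hα₀ := hδ₀.trans hδ
  have hπδ : π * δ ≤ π * α := by gcongr
  have hπα : π * α ≤ π / 2 := by linarith [mul_le_mul_of_nonneg_left hα pi_nonneg]
  rcases eq_or_ne n 0 with rfl | hn
  · rw [abs_oneSubCosCoeff_zero, abs_oneSubCosCoeff_zero]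
    gcongr
    exact antitoneOn_sinc ⟨by positivity, by linarith [pi_nonneg]⟩
      ⟨by positivity, by linarith [pi_nonneg]⟩ hπδ
  · have hpos := sub_mul_add_pos_of_ne_zero (δ := α) (abs_lt.mpr ⟨by linarith, by linarith⟩) hn
    have hsinδ : 0 ≤ sin (π * δ) :=
      sin_nonneg_of_nonneg_of_le_pi (by positivity) (by linarith [pi_nonneg])
    have hsin : sin (π * δ) ≤ sin (π * α) :=
      sin_le_sin_of_le_of_le_pi_div_two (by linarith [pi_nonneg, mul_nonneg pi_nonneg hδ₀]) hπα hπδ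
    have hsinα := hsinδ.trans hsin
    rw [abs_oneSubCosCoeff_of_ne_zero hδ₀ (by linarith) hn,
      abs_oneSubCosCoeff_of_ne_zero hα₀ (by linarith) hn]
    gcongr ?_ / (π * ?_)
    · gcongr
    · linarith [pow_le_pow_left₀ hδ₀ hδ 2]

theorem abs_sinCoeff_le {α δ : ℝ} (hα : α ≤ 1 / 4) (hδ : |δ| ≤ α) (n : ℤ) :
    |sinCoeff δ n| ≤ |sinCoeff α n| := by
  rw [← abs_sinCoeff_abs δ]
  have hδ₀ := abs_nonneg δ
  generalize |δ| = δ at hδ hδ₀ ⊢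
  have hα₀ := hδ₀.trans hδ
  have hπδ : π * δ ≤ π * α := by gcongr
  have hπα : π * α ≤ π / 4 := by linarith [mul_le_mul_of_nonneg_left hα pi_nonneg]
  have hpos := sub_half_sub_mul_sub_half_add_pos (δ := α)
    (abs_lt.mpr ⟨by linarith, by linarith⟩) n
  have hcos : δ * cos (π * δ) ≤ α * cos (π * α) := by
    refine le_of_mul_le_mul_left ?_ pi_pos
    simpa only [mul_assoc] using monotoneOn_mul_cos ⟨by positivity, hπδ.trans hπα⟩
      ⟨by positivity, hπα⟩ hπδ
  have hcosα : 0 ≤ cos (π * α) := cos_nonneg_of_neg_pi_div_two_le_of_le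
    (by linarith [mul_nonneg pi_nonneg hα₀, pi_nonneg]) (by linarith [pi_nonneg])
  rw [abs_sinCoeff hδ₀ (by linarith), abs_sinCoeff hα₀ (by linarith)]
  gcongr ?_ / (π * ?_)
  linarith [pow_le_pow_left₀ hδ₀ hδ 2]

theorem exp_I_mul_intCast_mul_pi (n : ℤ) : Complex.exp (I * n * π) = (-1) ^ n := by
  rw [show I * n * π = n * (π * I) by ring, Complex.exp_int_mul, Complex.exp_pi_mul_I]

theorem neg_one_zpow_mul_oneSubCosCoeff {δ : ℝ} (hδ₀ : 0 ≤ δ) (hδ₁ : δ < 1) (n : ℤ) :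
    (-1) ^ n * oneSubCosCoeff δ n = |oneSubCosCoeff δ n| := by
  rcases eq_or_ne n 0 with rfl | hn
  · rw [abs_oneSubCosCoeff_zero, oneSubCosCoeff_zero, zpow_zero, one_mul]
  · have hpos := sub_mul_add_pos_of_ne_zero (abs_lt.mpr ⟨by linarith, hδ₁⟩) hn
    rw [abs_oneSubCosCoeff_of_ne_zero hδ₀ hδ₁ hn, oneSubCosCoeff_of_ne hn
      (left_ne_zero_of_mul hpos.ne') (right_ne_zero_of_mul hpos.ne'), ← mul_assoc, ← mul_zpow,
      neg_one_mul, neg_neg, one_zpow, one_mul]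

theorem neg_one_zpow_mul_sinCoeff {δ : ℝ} (hδ₀ : 0 ≤ δ) (hδ₁ : δ < 1 / 2) (n : ℤ) :
    (-1) ^ n * sinCoeff δ n = -|sinCoeff δ n| := by
  have hpos := sub_half_sub_mul_sub_half_add_pos (abs_lt.mpr ⟨by linarith, hδ₁⟩) n
  rw [abs_sinCoeff hδ₀ hδ₁, sinCoeff_of_ne (left_ne_zero_of_mul hpos.ne')
    (right_ne_zero_of_mul hpos.ne'), mul_neg, ← mul_assoc, ← mul_zpow, neg_one_mul, neg_neg,
    one_zpow, one_mul]

theorem hasSum_abs_oneSubCosCoeff {δ : ℝ} (hδ₀ : 0 ≤ δ) (hδ₁ : δ < 1) :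
    HasSum (fun n ↦ |oneSubCosCoeff δ n|) (1 - cos (π * δ)) := by
  have hsum := hasSum_oneSubCosCoeff_mul_exp δ (Set.right_mem_Icc.mpr (by linarith [pi_nonneg]))
  have hterm (n : ℤ) : (oneSubCosCoeff δ n : ℂ) * Complex.exp (I * n * π) =
      (|oneSubCosCoeff δ n| : ℝ) := by
    rw [exp_I_mul_intCast_mul_pi, ← neg_one_zpow_mul_oneSubCosCoeff hδ₀ hδ₁, mul_comm]
    push_cast
    rfl
  simpa only [hterm, Complex.hasSum_ofReal, mul_comm δ] using hsum

theorem hasSum_abs_sinCoeff {δ : ℝ} (hδ₀ : 0 ≤ δ) (hδ₁ : δ < 1 / 2) :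
    HasSum (fun n ↦ |sinCoeff δ n|) (sin (π * δ)) := by
  have hsum := hasSum_sinCoeff_mul_exp δ (Set.right_mem_Icc.mpr (by linarith [pi_nonneg]))
  have hterm (n : ℤ) : (sinCoeff δ n : ℂ) * (-I * Complex.exp (I * (n - 1 / 2) * π)) =
      (|sinCoeff δ n| : ℝ) := by
    have hsign : ((-1) ^ n * sinCoeff δ n : ℂ) = -(|sinCoeff δ n| : ℝ) := by
      rw [← Complex.ofReal_neg, ← neg_one_zpow_mul_sinCoeff hδ₀ hδ₁]
      push_cast
      rfl
    rw [show I * (n - 1 / 2) * π = I * n * π + -π / 2 * I by ring, Complex.exp_add,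
      exp_I_mul_intCast_mul_pi, Complex.exp_neg_pi_div_two_mul_I]
    linear_combination (sinCoeff δ n * (-1) ^ n : ℂ) * Complex.I_sq - hsign
  simpa only [hterm, Complex.hasSum_ofReal, mul_comm δ] using hsum

end KadecCoefficients

section HadamardProduct

open scoped Matrix Matrix.Norms.L2Operator

theorem vecMulVec_hadamard {m n R : Type*} [Fintype m] [Fintype n] [DecidableEq m] [DecidableEq n]
    [CommSemiring R] (u : m → R) (v : n → R) (K : Matrix m n R) :
    Matrix.vecMulVec u v ⊙ K = Matrix.diagonal u * K * Matrix.diagonal v := by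
  ext i j
  rw [Matrix.hadamard_apply, Matrix.vecMulVec_apply, Matrix.mul_diagonal, Matrix.diagonal_mul,
    mul_right_comm]

theorem norm_hadamard_le_of_hasSum {ι m n 𝕜 : Type*} [Fintype m] [Fintype n] [DecidableEq n]
    [RCLike 𝕜] {φ : ι → m → 𝕜} {a : ι → n → 𝕜} {A : ι → ℝ} {S : ℝ}
    {G : Matrix m n 𝕜} (hG : ∀ k j, HasSum (fun i ↦ φ i k * a i j) (G k j))
    (hφ : ∀ i k, ‖φ i k‖ ≤ 1) (ha : ∀ i j, ‖a i j‖ ≤ A i) (hA : HasSum A S) (K : Matrix m n 𝕜) :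
    ‖G ⊙ K‖ ≤ S * ‖K‖ := by
  classical
  have hsum : HasSum (fun i ↦ Matrix.diagonal (φ i) * K * Matrix.diagonal (a i)) (G ⊙ K) := by
    simp_rw [← vecMulVec_hadamard]
    exact Pi.hasSum.mpr fun k ↦ Pi.hasSum.mpr fun j ↦ (hG k j).mul_right (K k j)
  refine hsum.norm_le_of_bounded (hA.mul_right ‖K‖) fun i ↦ ?_
  rcases isEmpty_or_nonempty n with hn | ⟨⟨j⟩⟩
  · simp [Subsingleton.elim K 0]
  have hA₀ : 0 ≤ A i := (norm_nonneg _).trans (ha i j)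
  calc ‖Matrix.diagonal (φ i) * K * Matrix.diagonal (a i)‖
      ≤ ‖Matrix.diagonal (φ i)‖ * ‖K‖ * ‖Matrix.diagonal (a i)‖ :=
        (Matrix.l2_opNorm_mul _ _).trans (by gcongr; exact Matrix.l2_opNorm_mul _ _)
    _ ≤ 1 * ‖K‖ * A i := by
        simp_rw [Matrix.l2_opNorm_diagonal]
        gcongr
        · exact (pi_norm_le_iff_of_nonneg zero_le_one).mpr (hφ i)
        · exact (pi_norm_le_iff_of_nonneg hA₀).mpr (ha i)
    _ = A i * ‖K‖ := by rw [one_mul, mul_comm]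

end HadamardProduct

section ScaledUnitary

open scoped Matrix Matrix.Norms.L2Operator

variable {m n 𝕜 : Type*} [Fintype m] [Fintype n] [DecidableEq n] [RCLike 𝕜]
  {c : ℝ} {K : Matrix m n 𝕜}

theorem l2_opNorm_le_sqrt_of_conjTranspose_mul_self (hc : 0 ≤ c)
    (hK : Kᴴ * K = (c : 𝕜) • (1 : Matrix n n 𝕜)) : ‖K‖ ≤ √c := by
  refine le_sqrt_of_sq_le ?_
  calc ‖K‖ ^ 2 = ‖(c : 𝕜) • (1 : Matrix n n 𝕜)‖ := by
        rw [← hK, Matrix.l2_opNorm_conjTranspose_mul_self, sq]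
    _ ≤ c := by
        rw [← Matrix.diagonal_one, ← Matrix.diagonal_smul, Matrix.l2_opNorm_diagonal]
        refine (pi_norm_le_iff_of_nonneg hc).mpr fun i ↦ ?_
        simp [abs_of_nonneg hc]

theorem sqrt_mul_norm_le_norm_mulVec (hc : 0 ≤ c)
    (hK : Kᴴ * K = (c : 𝕜) • (1 : Matrix n n 𝕜)) (v : EuclideanSpace 𝕜 n) :
    √c * ‖v‖ ≤ ‖WithLp.toLp 2 (K *ᵥ v)‖ := by
  classical
  rcases hc.eq_or_lt with rfl | hc
  · simp
  refine le_of_mul_le_mul_left ?_ (sqrt_pos.mpr hc)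
  calc √c * (√c * ‖v‖) = ‖WithLp.toLp 2 (Kᴴ *ᵥ WithLp.toLp 2 (K *ᵥ v))‖ := by
        rw [← mul_assoc, mul_self_sqrt hc.le, Matrix.mulVec_mulVec, hK, Matrix.smul_mulVec,
          Matrix.one_mulVec, WithLp.toLp_smul, norm_smul, RCLike.norm_ofReal, abs_of_pos hc]
    _ ≤ √c * ‖WithLp.toLp 2 (K *ᵥ v)‖ := by
        refine (Matrix.l2_opNorm_mulVec _ _).trans ?_
        rw [Matrix.l2_opNorm_conjTranspose]
        gcongr
        exact l2_opNorm_le_sqrt_of_conjTranspose_mul_self hc.le hK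

theorem one_sub_mul_norm_le_norm_mulVec {E : Matrix m n 𝕜} {L : ℝ} (hc : 0 ≤ c)
    (hK : Kᴴ * K = (c : 𝕜) • (1 : Matrix n n 𝕜)) (hE : ‖K - E‖ ≤ L * √c)
    (v : EuclideanSpace 𝕜 n) :
    (1 - L) * (√c * ‖v‖) ≤ ‖WithLp.toLp 2 (E *ᵥ v)‖ := by
  have hKv := sqrt_mul_norm_le_norm_mulVec hc hK v
  have hdiff : ‖WithLp.toLp 2 (K *ᵥ v) - WithLp.toLp 2 (E *ᵥ v)‖ ≤ L * √c * ‖v‖ := by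
    rw [← WithLp.toLp_sub, ← Matrix.sub_mulVec]
    exact (Matrix.l2_opNorm_mulVec _ _).trans (by gcongr)
  linarith [norm_sub_norm_le (WithLp.toLp 2 (K *ᵥ v)) (WithLp.toLp 2 (E *ᵥ v))]

end ScaledUnitary

section FourierMatrix

open scoped Matrix Matrix.Norms.L2Operator

theorem injOn_intCast_zmod_Icc (N : ℕ) :
    Set.InjOn (fun k : ℤ ↦ (k : ZMod (2 * N + 1))) (Icc (-(N : ℤ)) N) := by
  intro i hi j hj hij
  rw [coe_Icc, Set.mem_Icc] at hi hj
  have hdvd := (ZMod.intCast_eq_intCast_iff_dvd_sub _ _ _).mp hij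
  push_cast at hdvd
  exact (sub_eq_zero.mp (Int.eq_zero_of_abs_lt_dvd hdvd
    (abs_lt.mpr ⟨by linarith, by linarith⟩))).symm

theorem sum_Icc_intCast_zmod {M : Type*} [AddCommMonoid M] (N : ℕ) (f : ZMod (2 * N + 1) → M) :
    ∑ k ∈ Icc (-(N : ℤ)) N, f k = ∑ a, f a := by
  have hinj := injOn_intCast_zmod_Icc N
  rw [← sum_image (g := fun k : ℤ ↦ (k : ZMod (2 * N + 1))) (f := f) hinj]
  congr 1
  rw [← card_eq_iff_eq_univ, card_image_of_injOn hinj, Int.card_Icc, ZMod.card]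
  omega

theorem sum_Icc_exp_I_mul (N : ℕ) (m : ℤ) :
    ∑ k ∈ Icc (-(N : ℤ)) N, Complex.exp (I * k * (m * (2 * π / (2 * N + 1)))) =
      if (m : ZMod (2 * N + 1)) = 0 then (2 * N + 1 : ℂ) else 0 := by
  have hexp (k : ℤ) : Complex.exp (I * k * (m * (2 * π / (2 * N + 1)))) =
      ZMod.stdAddChar ((k : ZMod (2 * N + 1)) * (m : ZMod (2 * N + 1))) := by
    rw [← Int.cast_mul, ZMod.stdAddChar_coe]
    push_cast
    ring_nf
  simp_rw [hexp]
  rw [sum_Icc_intCast_zmod N fun a ↦ ZMod.stdAddChar (a * (m : ZMod (2 * N + 1))),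
    AddChar.sum_mulShift _ (ZMod.isPrimitive_stdAddChar _), ZMod.card]
  push_cast
  rfl

/-- The node `j * h` of the equispaced grid with `2 * N + 1` points and step
`h = 2 * π / (2 * N + 1)`. -/
noncomputable def equispacedNode (N : ℕ) (j : ℤ) : ℝ :=
  j * (2 * π / (2 * N + 1))

theorem equispacedNode_mem_Icc {N : ℕ} {j : ℤ} (hj : j ∈ Icc (-(N : ℤ)) N) :
    equispacedNode N j ∈ Set.Icc (-π) π := by
  have hj' : |(j : ℝ)| ≤ N := by exact_mod_cast abs_le.mpr (mem_Icc.mp hj)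
  rw [Set.mem_Icc, ← abs_le, equispacedNode, abs_mul,
    abs_of_pos (by positivity : 0 < 2 * π / (2 * N + 1))]
  calc |(j : ℝ)| * (2 * π / (2 * N + 1)) ≤ N * (2 * π / (2 * N + 1)) := by gcongr
    _ = π * (2 * N / (2 * N + 1)) := by ring
    _ ≤ π * 1 := by
        gcongr
        exact (div_le_one (by positivity)).mpr (by linarith)
    _ = π := mul_one π

/-- The matrix evaluating trigonometric polynomials of degree at most `N` at the nodes `x j`,
`|j| ≤ N`: rows are indexed by frequencies and columns by nodes. -/
noncomputable def fourierMatrix (N : ℕ) (x : ℤ → ℝ) :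
    Matrix (Icc (-(N : ℤ)) N) (Icc (-(N : ℤ)) N) ℂ :=
  Matrix.of fun k j ↦ Complex.exp (I * (k : ℤ) * x j)

theorem conjTranspose_mul_fourierMatrix_equispacedNode (N : ℕ) :
    (fourierMatrix N (equispacedNode N))ᴴ * fourierMatrix N (equispacedNode N) =
      ((2 * N + 1 : ℝ) : ℂ) • 1 := by
  ext i j
  have hexp (k : ℤ) : star (Complex.exp (I * k * equispacedNode N i)) *
      Complex.exp (I * k * equispacedNode N j) =
        Complex.exp (I * k * (((j - i : ℤ) : ℂ) * (2 * π / (2 * N + 1)))) := by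
    rw [← starRingEnd_apply, ← Complex.exp_conj, ← Complex.exp_add]
    simp only [map_mul, Complex.conj_I, map_intCast, Complex.conj_ofReal, equispacedNode]
    push_cast
    ring_nf
  have hij : ((j - i : ℤ) : ZMod (2 * N + 1)) = 0 ↔ i = j := by
    rw [Int.cast_sub, sub_eq_zero, (injOn_intCast_zmod_Icc N).eq_iff j.2 i.2, eq_comm,
      Subtype.coe_inj]
  simp only [Matrix.mul_apply, Matrix.conjTranspose_apply, fourierMatrix, Matrix.of_apply, hexp]
  rw [sum_coe_sort (Icc (-(N : ℤ)) N) fun k : ℤ ↦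
    Complex.exp (I * k * (((j - i : ℤ) : ℂ) * (2 * π / (2 * N + 1)))), sum_Icc_exp_I_mul,
    Matrix.smul_apply, Matrix.one_apply]
  simp only [hij]
  split_ifs <;> simp

theorem fourierMatrix_eq_hadamard {N : ℕ} {x δ : ℤ → ℝ}
    (hx : ∀ j, x j = equispacedNode N j + δ j * (2 * π / (2 * N + 1))) :
    fourierMatrix N x = (Matrix.of fun k j : Icc (-(N : ℤ)) N ↦
      Complex.exp (I * (δ j * equispacedNode N k))) ⊙ fourierMatrix N (equispacedNode N) := by
  ext k j
  simp only [fourierMatrix, Matrix.hadamard_apply, Matrix.of_apply, ← Complex.exp_add, hx]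
  congr 1
  simp only [equispacedNode]
  push_cast
  ring

end FourierMatrix

section KadecBound

open scoped Matrix Matrix.Norms.L2Operator

theorem norm_sub_hadamard_exp_le {m n : Type*} [Fintype m] [Fintype n] [DecidableEq n] {α : ℝ}
    (hα₀ : 0 ≤ α) (hα : α ≤ 1 / 4) {t : m → ℝ} (ht : ∀ k, t k ∈ Set.Icc (-π) π) {δ : n → ℝ}
    (hδ : ∀ j, |δ j| ≤ α) (K : Matrix m n ℂ) :
    ‖K - (Matrix.of fun k j ↦ Complex.exp (I * (δ j * t k))) ⊙ K‖ ≤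
      (1 - cos (π * α) + sin (π * α)) * ‖K‖ := by
  let C : Matrix m n ℂ := Matrix.of fun k j ↦ ((1 - cos (δ j * t k) : ℝ) : ℂ)
  let S : Matrix m n ℂ := Matrix.of fun k j ↦ (sin (δ j * t k) : ℂ)
  have hexp : K - (Matrix.of fun k j ↦ Complex.exp (I * (δ j * t k))) ⊙ K =
      C ⊙ K - I • (S ⊙ K) := by
    ext k j
    simp only [C, S, Matrix.sub_apply, Matrix.smul_apply, Matrix.hadamard_apply, Matrix.of_apply,
      smul_eq_mul, mul_comm I, Complex.exp_mul_I]
    push_cast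
    ring
  have hC : ‖C ⊙ K‖ ≤ (1 - cos (π * α)) * ‖K‖ := by
    refine norm_hadamard_le_of_hasSum (φ := fun n k ↦ Complex.exp (I * (n : ℤ) * t k))
      (a := fun n j ↦ (oneSubCosCoeff (δ j) n : ℂ))
      (fun k j ↦ (hasSum_oneSubCosCoeff_mul_exp (δ j) (ht k)).congr_fun fun n ↦ mul_comm _ _)
      (fun n k ↦ ?_) (fun n j ↦ ?_) (hasSum_abs_oneSubCosCoeff hα₀ (by linarith)) K
    · simp [Complex.norm_exp]
    · simpa using abs_oneSubCosCoeff_le (by linarith) (hδ j) n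
  have hS : ‖S ⊙ K‖ ≤ sin (π * α) * ‖K‖ := by
    refine norm_hadamard_le_of_hasSum
      (φ := fun n k ↦ -I * Complex.exp (I * ((n : ℤ) - 1 / 2) * t k))
      (a := fun n j ↦ (sinCoeff (δ j) n : ℂ))
      (fun k j ↦ (hasSum_sinCoeff_mul_exp (δ j) (ht k)).congr_fun fun n ↦ mul_comm _ _)
      (fun n k ↦ ?_) (fun n j ↦ ?_) (hasSum_abs_sinCoeff hα₀ (by linarith)) K
    · simp [Complex.norm_exp]
    · simpa using abs_sinCoeff_le hα (hδ j) n
  rw [hexp, add_mul]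
  refine (norm_sub_le _ _).trans (add_le_add hC ?_)
  rwa [norm_smul, Complex.norm_I, one_mul]

theorem norm_fourierMatrix_sub_le {N : ℕ} {α : ℝ} (hα₀ : 0 ≤ α) (hα : α ≤ 1 / 4) {x : ℤ → ℝ}
    (hx : PerturbedNodes N α x) :
    ‖fourierMatrix N (equispacedNode N) - fourierMatrix N x‖ ≤
      (1 - cos (π * α) + sin (π * α)) * √(2 * N + 1) := by
  have hh : 0 < 2 * π / (2 * N + 1) := by positivity
  let δ : ℤ → ℝ := fun j ↦ (x j - equispacedNode N j) / (2 * π / (2 * N + 1))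
  have hδ (j : Icc (-(N : ℤ)) N) : |δ j| ≤ α := by
    rw [abs_div, abs_of_pos hh, div_le_iff₀ hh]
    exact hx j j.2
  have hxδ (j : ℤ) : x j = equispacedNode N j + δ j * (2 * π / (2 * N + 1)) := by
    rw [div_mul_cancel₀ _ hh.ne', add_sub_cancel]
  have hsin : 0 ≤ sin (π * α) := sin_nonneg_of_nonneg_of_le_pi (by positivity)
    (mul_le_of_le_one_right pi_nonneg (by linarith))
  rw [fourierMatrix_eq_hadamard hxδ]
  refine (norm_sub_hadamard_exp_le hα₀ hα (fun k ↦ equispacedNode_mem_Icc k.2) hδ _).trans ?_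
  gcongr
  · linarith [cos_le_one (π * α)]
  · exact l2_opNorm_le_sqrt_of_conjTranspose_mul_self (by positivity)
      (conjTranspose_mul_fourierMatrix_equispacedNode N)

theorem isTrigPoly_exp {N : ℕ} {k : ℤ} (hk : k ∈ Icc (-(N : ℤ)) N) :
    IsTrigPoly N fun t ↦ Complex.exp (I * k * t) := by
  refine ⟨Pi.single k 1, fun t ↦ ?_⟩
  rw [sum_eq_single_of_mem k hk fun b _ hb ↦ by rw [Pi.single_eq_of_ne hb, zero_mul],
    Pi.single_eq_same, one_mul]

variable {N : ℕ} {x w : ℤ → ℝ}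

theorem fourierMatrix_mulVec_of_exactQuad (hw : ExactQuad N x w) :
    (fourierMatrix N x *ᵥ fun j ↦ (w j : ℂ)) = Pi.single ⟨0, by simp⟩ (2 * π : ℂ) := by
  have h2π : (2 * π : ℂ) ≠ 0 := by exact_mod_cast two_pi_pos.ne'
  ext k
  have hk : (fourierMatrix N x *ᵥ fun j ↦ (w j : ℂ)) k = 2 * π * sinc (π * (k : ℤ)) := by
    rw [← inv_two_pi_mul_integral_exp_I_mul, mul_inv_cancel_left₀ h2π, Complex.ofReal_intCast,
      ← hw _ (isTrigPoly_exp k.2), ← sum_coe_sort]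
    simp only [Matrix.mulVec, dotProduct, fourierMatrix, Matrix.of_apply, mul_comm]
  rw [hk, Pi.single_apply]
  split_ifs with h
  · simp [h]
  · have hk₀ : ((k : ℤ) : ℝ) ≠ 0 := Int.cast_ne_zero.mpr fun h₀ ↦ h (Subtype.ext h₀)
    rw [sinc_of_ne_zero (mul_ne_zero pi_ne_zero hk₀), mul_comm π, sin_int_mul_pi, zero_div,
      Complex.ofReal_zero, mul_zero]

theorem sum_abs_le_sqrt_card_mul_norm {ι : Type*} (s : Finset ι) (v : ι → ℝ) :
    ∑ i ∈ s, |v i| ≤ √(#s) * ‖WithLp.toLp 2 fun i : s ↦ (v i : ℂ)‖ := by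
  rw [EuclideanSpace.norm_eq, ← sqrt_mul (Nat.cast_nonneg _)]
  refine le_sqrt_of_sq_le (sq_sum_le_card_mul_sum_sq.trans_eq ?_)
  simp only [Complex.norm_real, norm_eq_abs]
  rw [sum_coe_sort s fun i ↦ |v i| ^ 2]

theorem sum_abs_le_of_exactQuad {α : ℝ} (hα₀ : 0 ≤ α) (hα : α < 1 / 4)
    (hx : PerturbedNodes N α x) (hw : ExactQuad N x w) :
    ∑ j ∈ Icc (-(N : ℤ)) N, |w j| ≤ 2 * π / (cos (π * α) - sin (π * α)) := by
  have hD : 0 < cos (π * α) - sin (π * α) := sub_pos.mpr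
    (sin_lt_cos_of_lt_pi_div_four (by positivity) (by linarith [mul_lt_mul_of_pos_left hα pi_pos]))
  have hcard : (#(Icc (-(N : ℤ)) N) : ℝ) = 2 * N + 1 := by
    rw [Int.card_Icc, show ((N : ℤ) + 1 - -N).toNat = 2 * N + 1 by omega]
    push_cast
    rfl
  have hsum := sum_abs_le_sqrt_card_mul_norm (Icc (-(N : ℤ)) N) w
  have hbelow := one_sub_mul_norm_le_norm_mulVec (c := 2 * N + 1) (by positivity)
    (conjTranspose_mul_fourierMatrix_equispacedNode N) (norm_fourierMatrix_sub_le hα₀ hα.le hx)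
    (WithLp.toLp 2 fun j ↦ (w j : ℂ))
  rw [fourierMatrix_mulVec_of_exactQuad hw, PiLp.toLp_single, PiLp.norm_single, norm_mul,
    Complex.norm_two, Complex.norm_real, norm_of_nonneg pi_nonneg] at hbelow
  rw [hcard] at hsum
  rw [le_div_iff₀' hD]
  refine (mul_le_mul_of_nonneg_left hsum hD.le).trans ?_
  rwa [sub_add, sub_sub_cancel] at hbelow

end KadecBound

section HorizontalStrip

/-- The open strip of half-width `ρ` around the real axis. -/
def horizontalStrip (ρ : ℝ) : Set ℂ :=
  {z | |z.im| < ρ}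

variable {ρ : ℝ}

theorem mem_horizontalStrip {z : ℂ} : z ∈ horizontalStrip ρ ↔ |z.im| < ρ :=
  Iff.rfl

theorem ofReal_mem_horizontalStrip (hρ : 0 < ρ) (t : ℝ) : (t : ℂ) ∈ horizontalStrip ρ := by
  rwa [mem_horizontalStrip, Complex.ofReal_im, abs_zero]

theorem add_ofReal_mem_horizontalStrip {z : ℂ} (t : ℝ) :
    z + t ∈ horizontalStrip ρ ↔ z ∈ horizontalStrip ρ := by
  rw [mem_horizontalStrip, Complex.add_im, Complex.ofReal_im, add_zero, mem_horizontalStrip]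

theorem ofReal_add_mul_I_mem_horizontalStrip {t y : ℝ} :
    (t : ℂ) + y * I ∈ horizontalStrip ρ ↔ |y| < ρ := by
  simp [mem_horizontalStrip]

theorem isOpen_horizontalStrip (ρ : ℝ) : IsOpen (horizontalStrip ρ) :=
  isOpen_lt (by fun_prop) continuous_const

theorem convex_horizontalStrip (ρ : ℝ) : Convex ℝ (horizontalStrip ρ) := by
  have h : horizontalStrip ρ = Complex.imLm ⁻¹' Set.Ioo (-ρ) ρ := by
    ext z
    simp [mem_horizontalStrip, abs_lt]
  exact h ▸ (convex_Ioo _ _).linear_preimage _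

variable {E : Type*} [NormedAddCommGroup E] [NormedSpace ℂ E] {F : ℂ → E}

theorem apply_add_eq_of_periodic_ofReal [CompleteSpace E] (hρ : 0 < ρ)
    (hF : DifferentiableOn ℂ F (horizontalStrip ρ)) {T : ℝ}
    (hT : Function.Periodic (fun t : ℝ ↦ F t) T) {z : ℂ} (hz : z ∈ horizontalStrip ρ) :
    F (z + T) = F z := by
  have hF' : DifferentiableOn ℂ (fun z ↦ F (z + T)) (horizontalStrip ρ) :=
    hF.comp (by fun_prop) fun z hz ↦ (add_ofReal_mem_horizontalStrip T).mpr hz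
  have hopen := isOpen_horizontalStrip ρ
  have hreal : Filter.Tendsto (fun t : ℝ ↦ (t : ℂ)) (nhdsWithin 0 {0}ᶜ)
      (nhdsWithin (0 : ℝ) {0}ᶜ) :=
    Complex.continuous_ofReal.continuousWithinAt.tendsto_nhdsWithin fun t ht ↦ by simpa using ht
  refine (hF'.analyticOnNhd hopen).eqOn_of_preconnected_of_frequently_eq (hF.analyticOnNhd hopen)
    (convex_horizontalStrip ρ).isPreconnected (ofReal_mem_horizontalStrip hρ 0)
    (hreal.frequently (.of_forall fun t ↦ ?_)) hz
  simpa using hT t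

theorem integral_eq_integral_add_mul_I (hF : DifferentiableOn ℂ F (horizontalStrip ρ)) {a b : ℝ}
    (hab : ∀ s : ℝ, |s| < ρ → F (a + s * I) = F (b + s * I)) {y : ℝ} (hy : |y| < ρ) :
    ∫ t in a..b, F t = ∫ t in a..b, F (t + y * I) := by
  have hlt {s : ℝ} (hs : s ∈ Set.uIcc 0 y) : |s| < ρ :=
    (by simpa using Set.abs_sub_left_of_mem_uIcc hs : |s| ≤ |y|).trans_lt hy
  have hrect := Complex.integral_boundary_rect_eq_zero_of_differentiableOn F a (b + y * I)
    (hF.mono fun z hz ↦ hlt (by simpa using (Complex.mem_reProdIm.mp hz).2))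
  have hsides : ∫ s in (0 : ℝ)..y, F (a + s * I) = ∫ s in (0 : ℝ)..y, F (b + s * I) :=
    intervalIntegral.integral_congr fun s hs ↦ hab s (hlt hs)
  simpa [hsides, sub_eq_zero] using hrect

end HorizontalStrip

section FourierDecay

variable {ρ M : ℝ} {F : ℂ → ℂ}

theorem norm_fourierCoeff_le_mul_exp (hρ : 0 < ρ) (hF : DifferentiableOn ℂ F (horizontalStrip ρ))
    (hFp : Function.Periodic (fun t : ℝ ↦ F t) (2 * π)) (hM : ∀ z ∈ horizontalStrip ρ, ‖F z‖ ≤ M)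
    (n : ℤ) {y : ℝ} (hy : |y| < ρ) :
    ‖(2 * π : ℂ)⁻¹ * ∫ t in -π..π, Complex.exp (-(I * n * t)) * F t‖ ≤ M * exp (n * y) := by
  have hends (s : ℝ) (hs : |s| < ρ) :
      Complex.exp (-(I * n * ((-π : ℝ) + s * I))) * F ((-π : ℝ) + s * I) =
        Complex.exp (-(I * n * (π + s * I))) * F (π + s * I) := by
    rw [show (π : ℂ) + s * I = (-π : ℝ) + s * I + (2 * π : ℝ) by push_cast; ring,
      apply_add_eq_of_periodic_ofReal hρ hF hFp (ofReal_add_mul_I_mem_horizontalStrip.mpr hs)]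
    have hper := periodic_exp_I_mul_intCast_mul n ((-π : ℝ) + s * I)
    simp only [Complex.exp_neg, hper]
  have hbound (t : ℝ) : ‖Complex.exp (-(I * n * (t + y * I))) * F (t + y * I)‖ ≤
      M * exp (n * y) := by
    rw [norm_mul, Complex.norm_exp, show (-(I * n * (t + y * I))).re = n * y by simp, mul_comm]
    gcongr
    exact hM _ (ofReal_add_mul_I_mem_horizontalStrip.mpr hy)
  have hint := intervalIntegral.norm_integral_le_of_norm_le_const (a := -π) (b := π)
    fun t _ ↦ hbound t
  rw [sub_neg_eq_add, ← two_mul, abs_of_pos two_pi_pos] at hint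
  rw [integral_eq_integral_add_mul_I (F := fun z ↦ Complex.exp (-(I * n * z)) * F z)
    (.mul (by fun_prop) hF) hends hy, norm_mul, norm_inv, norm_mul, Complex.norm_two,
    Complex.norm_real, norm_of_nonneg pi_nonneg, inv_mul_le_iff₀ two_pi_pos, mul_comm (2 * π)]
  exact hint

theorem norm_fourierCoeff_le_mul_pow (hρ : 0 < ρ) (hF : DifferentiableOn ℂ F (horizontalStrip ρ))
    (hFp : Function.Periodic (fun t : ℝ ↦ F t) (2 * π)) (hM : ∀ z ∈ horizontalStrip ρ, ‖F z‖ ≤ M)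
    (n : ℤ) :
    ‖(2 * π : ℂ)⁻¹ * ∫ t in -π..π, Complex.exp (-(I * n * t)) * F t‖ ≤
      M * exp (-ρ) ^ n.natAbs := by
  set C := ‖(2 * π : ℂ)⁻¹ * ∫ t in -π..π, Complex.exp (-(I * n * t)) * F t‖
  have hclosed : IsClosed {y | C ≤ M * exp (n * y)} := isClosed_le (by fun_prop) (by fun_prop)
  have hIcc : Set.Icc (-ρ) ρ ⊆ {y | C ≤ M * exp (n * y)} := by
    rw [← closure_Ioo (by linarith), hclosed.closure_subset_iff]
    exact fun y hy ↦ norm_fourierCoeff_le_mul_exp hρ hF hFp hM n (abs_lt.mpr hy)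
  rw [← exp_nat_mul, Nat.cast_natAbs, Int.cast_abs]
  rcases le_total (0 : ℝ) n with hn | hn
  · rw [abs_of_nonneg hn]
    exact hIcc (Set.left_mem_Icc.mpr (by linarith))
  · rw [abs_of_nonpos hn, neg_mul_neg]
    exact hIcc (Set.right_mem_Icc.mpr (by linarith))

end FourierDecay

section Truncation

theorem hasSum_pow_natAbs {r : ℝ} (hr₀ : 0 ≤ r) (hr₁ : r < 1) :
    HasSum (fun n : ℤ ↦ r ^ n.natAbs) (2 * (1 - r)⁻¹ - 1) := by
  have hgeom := hasSum_geometric_of_lt_one hr₀ hr₁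
  simpa [two_mul] using HasSum.of_nat_of_neg (f := fun n : ℤ ↦ r ^ n.natAbs)
    (by simpa using hgeom) (by simpa using hgeom)

theorem sum_Icc_pow_natAbs {r : ℝ} (hr : r ≠ 1) (N : ℕ) :
    ∑ n ∈ Icc (-(N : ℤ)) N, r ^ n.natAbs = 2 * ((r ^ (N + 1) - 1) / (r - 1)) - 1 := by
  rw [sum_Icc_of_even_eq_range (fun n ↦ by rw [Int.natAbs_neg])]
  simp [geom_sum_eq hr]

theorem norm_sub_sum_Icc_le {E : Type*} [NormedAddCommGroup E] {M r : ℝ} (hr₀ : 0 ≤ r) (hr₁ : r < 1)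
    {u : ℤ → E} {s : E} (hu : HasSum u s) (hb : ∀ n, ‖u n‖ ≤ M * r ^ n.natAbs) (N : ℕ) :
    ‖s - ∑ n ∈ Icc (-(N : ℤ)) N, u n‖ ≤ M * (2 * r ^ (N + 1) / (1 - r)) := by
  have htail := (Finset.hasSum_iff_compl (Icc (-(N : ℤ)) N)).mp (hasSum_pow_natAbs hr₀ hr₁)
  have hrate : 2 * (1 - r)⁻¹ - 1 - ∑ n ∈ Icc (-(N : ℤ)) N, r ^ n.natAbs =
      2 * r ^ (N + 1) / (1 - r) := by
    have h₁ : 1 - r ≠ 0 := (sub_pos.mpr hr₁).ne'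
    rw [sum_Icc_pow_natAbs hr₁.ne, ← neg_sub 1 r]
    field_simp
    ring
  exact ((Finset.hasSum_iff_compl _).mp hu).norm_le_of_bounded ((hrate ▸ htail).mul_left M)
    fun n ↦ hb n

theorem exists_isTrigPoly_norm_sub_le {ρ M : ℝ} {F : ℂ → ℂ} (hρ : 0 < ρ)
    (hF : DifferentiableOn ℂ F (horizontalStrip ρ))
    (hFp : Function.Periodic (fun t : ℝ ↦ F t) (2 * π)) (hM : ∀ z ∈ horizontalStrip ρ, ‖F z‖ ≤ M)
    (N : ℕ) :
    ∃ q, IsTrigPoly N q ∧ ∀ t : ℝ, ‖F t - q t‖ ≤ 2 * M * (exp (-ρ * N) / (exp ρ - 1)) := by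
  have hcont : Continuous fun t : ℝ ↦ F t :=
    hF.continuousOn.comp_continuous Complex.continuous_ofReal (ofReal_mem_horizontalStrip hρ)
  have hr₀ := (exp_pos (-ρ)).le
  have hr₁ : exp (-ρ) < 1 := exp_lt_one_iff.mpr (neg_neg_of_pos hρ)
  let c : ℤ → ℂ := fun n ↦ (2 * π : ℂ)⁻¹ * ∫ t in -π..π, Complex.exp (-(I * n * t)) * F t
  have hc : ∀ n, ‖c n‖ ≤ M * exp (-ρ) ^ n.natAbs := norm_fourierCoeff_le_mul_pow hρ hF hFp hM
  have hs : Summable c := .of_norm_bounded ((hasSum_pow_natAbs hr₀ hr₁).summable.mul_left M) hc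
  have hterm (t : ℝ) (n : ℤ) : ‖c n * Complex.exp (I * n * t)‖ ≤ M * exp (-ρ) ^ n.natAbs := by
    simpa [Complex.norm_exp] using hc n
  have hrate : M * (2 * exp (-ρ) ^ (N + 1) / (1 - exp (-ρ))) =
      2 * M * (exp (-ρ * N) / (exp ρ - 1)) := by
    have hexp : exp ρ - 1 ≠ 0 := (sub_pos.mpr (one_lt_exp_iff.mpr hρ)).ne'
    rw [← exp_nat_mul, exp_neg, Nat.cast_succ, show ((N : ℝ) + 1) * -ρ = -ρ * N - ρ by ring,
      exp_sub]
    field_simp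
  refine ⟨fun t ↦ ∑ k ∈ Icc (-(N : ℤ)) N, c k * Complex.exp (I * k * t), ⟨c, fun _ ↦ rfl⟩,
    fun t ↦ ?_⟩
  exact (norm_sub_sum_Icc_le hr₀ hr₁ (hasSum_mul_exp_of_periodic_of_summable hcont hFp
    (fun _ ↦ rfl) hs t) (hterm t) N).trans_eq hrate

end Truncation

section QuadratureError

variable {N : ℕ} {x w : ℤ → ℝ} {f q : ℝ → ℂ}

theorem IsTrigPoly.continuous (hq : IsTrigPoly N q) : Continuous q := by
  obtain ⟨c, hc⟩ := hq
  rw [funext hc]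
  fun_prop

theorem ExactQuad.norm_sum_sub_integral_le (hw : ExactQuad N x w) (hf : Continuous f)
    (hq : IsTrigPoly N q) {ε : ℝ} (hfq : ∀ t, ‖f t - q t‖ ≤ ε) :
    ‖∑ j ∈ Icc (-(N : ℤ)) N, (w j : ℂ) * f (x j) - ∫ t in -π..π, f t‖ ≤
      (∑ j ∈ Icc (-(N : ℤ)) N, |w j| + 2 * π) * ε := by
  have hsplit : ∑ j ∈ Icc (-(N : ℤ)) N, (w j : ℂ) * f (x j) - ∫ t in -π..π, f t =
      ∑ j ∈ Icc (-(N : ℤ)) N, (w j : ℂ) * (f (x j) - q (x j)) - ∫ t in -π..π, (f t - q t) := by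
    rw [intervalIntegral.integral_sub (hf.intervalIntegrable _ _)
      (hq.continuous.intervalIntegrable _ _), ← hw q hq]
    simp only [mul_sub, sum_sub_distrib]
    ring
  have hsum : ‖∑ j ∈ Icc (-(N : ℤ)) N, (w j : ℂ) * (f (x j) - q (x j))‖ ≤
      (∑ j ∈ Icc (-(N : ℤ)) N, |w j|) * ε := by
    rw [sum_mul]
    refine norm_sum_le_of_le _ fun j _ ↦ ?_
    rw [norm_mul, Complex.norm_real, norm_eq_abs]
    gcongr
    exact hfq _
  have hint : ‖∫ t in -π..π, (f t - q t)‖ ≤ 2 * π * ε := by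
    refine (intervalIntegral.norm_integral_le_of_norm_le_const fun t _ ↦ hfq t).trans_eq ?_
    rw [sub_neg_eq_add, ← two_mul, abs_of_pos two_pi_pos, mul_comm]
  rw [hsplit, add_mul]
  exact (norm_sub_le _ _).trans (add_le_add hsum hint)

end QuadratureError

/-- geometric rate of convergence of quadrature at α-perturbed nodes
(α < 1/4) for periodic functions analytic and bounded by M in a strip of half-width ρ₀. -/
theorem quadrature_rate_analytic (ρ₀ M : ℝ) (hρ₀ : 0 < ρ₀) (hM : 0 < M)
    (f : ℝ → ℂ) (hfp : Function.Periodic f (2*π))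
    (F : ℂ → ℂ) (hFf : ∀ t : ℝ, F t = f t)
    (hFd : DifferentiableOn ℂ F {z : ℂ | |z.im| < ρ₀})
    (hFb : ∀ z : ℂ, |z.im| < ρ₀ → ‖F z‖ ≤ M)
    (α : ℝ) (hα0 : 0 ≤ α) (hα : α < 1/4) (N : ℕ) (hN : 0 < N)
    (x : ℤ → ℝ) (hx : PerturbedNodes N α x)
    (w : ℤ → ℝ) (hw : ExactQuad N x w) :
    ‖(∑ j ∈ Finset.Icc (-(N:ℤ)) (N:ℤ), (w j : ℂ) * f (x j)) - ∫ t in (-π)..π, f t‖ ≤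
      (16 * M * π / (Real.cos (π*α) - Real.sin (π*α))) *
        (Real.exp (-ρ₀ * N) / (Real.exp ρ₀ - 1)) := by
  obtain rfl : f = fun t : ℝ ↦ F t := funext fun t ↦ (hFf t).symm
  have hcont : Continuous fun t : ℝ ↦ F t :=
    hFd.continuousOn.comp_continuous Complex.continuous_ofReal (ofReal_mem_horizontalStrip hρ₀)
  obtain ⟨q, hq, hfq⟩ := exists_isTrigPoly_norm_sub_le hρ₀ hFd hfp hFb N
  have hπα : 0 ≤ π * α := by positivity
  have hπα' : π * α < π / 4 := by linarith [mul_lt_mul_of_pos_left hα pi_pos]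
  set D := cos (π * α) - sin (π * α)
  set R := exp (-ρ₀ * N) / (exp ρ₀ - 1)
  have hR : 0 ≤ R := div_nonneg (exp_pos _).le (sub_nonneg.mpr (one_le_exp hρ₀.le))
  have hD₀ : 0 < D := sub_pos.mpr (sin_lt_cos_of_lt_pi_div_four hπα hπα')
  have hD₁ : D ≤ 1 := by
    linarith [cos_le_one (π * α), sin_nonneg_of_nonneg_of_le_pi hπα (by linarith)]
  calc ‖∑ j ∈ Icc (-(N : ℤ)) N, (w j : ℂ) * F (x j) - ∫ t in -π..π, F t‖
      ≤ (∑ j ∈ Icc (-(N : ℤ)) N, |w j| + 2 * π) * (2 * M * R) :=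
        hw.norm_sum_sub_integral_le hcont hq hfq
    _ ≤ (2 * π / D + 2 * π / D) * (2 * M * R) := by
        gcongr
        · exact sum_abs_le_of_exactQuad hα0 hα hx hw
        · exact le_div_self two_pi_pos.le hD₀ hD₁
    _ = 8 * M * π / D * R := by ring
    _ ≤ 16 * M * π / D * R := by gcongr; norm_num
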